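/- arXiv:2409.12107 — 2 statements merged into one kernel-verified Lean document; each statement's English description precedes it below -/
import Mathlib

section
/- Let n > 1 and let P be a matrix with nonnegative real entries indexed by the permutations of Fin n such that P π π > 0 for every permutation π, and P π σ > 0 whenever σ = (Equiv.swap i j) * π for some pair of distinct indices i, j : Fin n. Then for every t ≥ n − 1 and all permutations π, σ, the entry (P^t) π σ is strictly positive. -/
/-!
If `f` moves `x`, then `swap x (f x) * f` moves strictly fewer points than `f`, so a permutation
moving `k ≥ 2` points is a product of at most `k - 1` transpositions. Applied to `σ * π⁻¹`, this
gives a path of at most `n - 1` steps from `π` to `σ` along positive entries of `P`; the positive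
diagonal of `P` lets the walk wait until time `t`.
-/

open Finset Equiv.Perm

section PositiveEntries

variable {ι R : Type*} [Fintype ι] [Semiring R] [PartialOrder R] [IsStrictOrderedRing R]

theorem matrix_mul_apply_pos {κ μ : Type*} {A : Matrix κ ι R} {B : Matrix ι μ R}
    (hA : ∀ i j, 0 ≤ A i j) (hB : ∀ i j, 0 ≤ B i j) {i : κ} {j : ι} {k : μ}
    (hij : 0 < A i j) (hjk : 0 < B j k) : 0 < (A * B) i k := by
  rw [Matrix.mul_apply]
  exact sum_pos' (fun l _ ↦ mul_nonneg (hA i l) (hB l k)) ⟨j, mem_univ j, mul_pos hij hjk⟩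

variable [DecidableEq ι] {P : Matrix ι ι R}

theorem matrix_pow_succ_apply_pos (hP : ∀ i j, 0 ≤ P i j) {t : ℕ} {i j k : ι}
    (hij : 0 < (P ^ t) i j) (hjk : 0 < P j k) : 0 < (P ^ (t + 1)) i k := by
  rw [pow_succ]
  exact matrix_mul_apply_pos (Matrix.pow_apply_nonneg hP t) hP hij hjk

theorem matrix_pow_apply_pos_of_le (hP : ∀ i j, 0 ≤ P i j) (hdiag : ∀ i, 0 < P i i)
    {s t : ℕ} (hst : s ≤ t) {i j : ι} (hs : 0 < (P ^ s) i j) : 0 < (P ^ t) i j := by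
  induction t, hst using Nat.le_induction with
  | base => exact hs
  | succ t _ ih => exact matrix_pow_succ_apply_pos hP ih (hdiag j)

theorem matrix_pow_length_apply_prod_smul_pos {M : Type*} [Monoid M] [MulAction M ι]
    (hP : ∀ i j, 0 ≤ P i j) {l : List M} (hl : ∀ g ∈ l, ∀ i, 0 < P i (g • i)) (i : ι) :
    0 < (P ^ l.length) i (l.prod • i) := by
  induction l with
  | nil => simp
  | cons g l ih =>
    obtain ⟨hg, hl⟩ := List.forall_mem_cons.mp hl
    rw [List.length_cons, List.prod_cons, mul_smul]
    exact matrix_pow_succ_apply_pos hP (ih hl) (hg _)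

end PositiveEntries

section Transpositions

variable {α : Type*} [Fintype α] [DecidableEq α]

theorem exists_isSwap_mul_eq_card_support_lt {f : Equiv.Perm α} (hf : f ≠ 1) :
    ∃ τ g : Equiv.Perm α, τ.IsSwap ∧ τ * g = f ∧ #g.support < #f.support := by
  obtain ⟨x, hx⟩ : ∃ x, f x ≠ x := not_forall.mp fun h ↦ hf (Equiv.ext h)
  exact ⟨Equiv.swap x (f x), Equiv.swap x (f x) * f, ⟨x, f x, hx.symm, rfl⟩,
    Equiv.swap_mul_self_mul x (f x) f, card_support_swap_mul hx⟩

theorem exists_list_isSwap_prod_eq (f : Equiv.Perm α) :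
    ∃ l : List (Equiv.Perm α),
      (∀ τ ∈ l, τ.IsSwap) ∧ l.prod = f ∧ l.length ≤ #f.support - 1 := by
  induction hk : #f.support using Nat.strong_induction_on generalizing f with
  | h k ih =>
    subst hk
    obtain rfl | hf := eq_or_ne f 1
    · exact ⟨[], by simp⟩
    obtain ⟨τ, g, hτ, hmul, hlt⟩ := exists_isSwap_mul_eq_card_support_lt hf
    obtain ⟨l, hl, hprod, hlen⟩ := ih _ hlt g rfl
    refine ⟨τ :: l, List.forall_mem_cons.mpr ⟨hτ, hl⟩, ?_, ?_⟩
    · rw [List.prod_cons, hprod, hmul]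
    · have htwo : 2 ≤ #f.support := two_le_card_support_of_ne_one hf
      rw [List.length_cons]
      omega

theorem transposition_walk_power_pos_general {R : Type*} [Semiring R] [PartialOrder R]
    [IsStrictOrderedRing R] {P : Matrix (Equiv.Perm α) (Equiv.Perm α) R}
    (hnonneg : ∀ π σ, 0 ≤ P π σ) (hlazy : ∀ π, 0 < P π π)
    (hswap : ∀ τ : Equiv.Perm α, τ.IsSwap → ∀ π, 0 < P π (τ * π))
    {t : ℕ} {π σ : Equiv.Perm α} (ht : #(σ * π⁻¹).support - 1 ≤ t) : 0 < (P ^ t) π σ := by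
  obtain ⟨l, hl, hprod, hlen⟩ := exists_list_isSwap_prod_eq (σ * π⁻¹)
  have hpath : 0 < (P ^ l.length) π (l.prod • π) :=
    matrix_pow_length_apply_prod_smul_pos hnonneg (fun τ hτ ↦ hswap τ (hl τ hτ)) π
  rw [hprod, smul_eq_mul, inv_mul_cancel_right] at hpath
  exact matrix_pow_apply_pos_of_le hnonneg hlazy (hlen.trans ht) hpath

end Transpositions

/-- Let `n > 1` and let `P` be a nonnegative matrix indexed by
permutations of `Fin n` with `P π π > 0` for all `π`, and `P π σ > 0` whenever
`σ = (Equiv.swap i j) * π` for distinct `i j : Fin n`. Then for every `t ≥ n - 1`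
and all permutations `π σ`, the entry `(P^t) π σ` is strictly positive. -/
theorem transposition_walk_power_pos
    (n : ℕ) (hn : 1 < n)
    (P : Matrix (Equiv.Perm (Fin n)) (Equiv.Perm (Fin n)) ℝ)
    (hnonneg : ∀ π σ, 0 ≤ P π σ)
    (hlazy : ∀ π, 0 < P π π)
    (hswap : ∀ π σ : Equiv.Perm (Fin n),
      (∃ i j : Fin n, i ≠ j ∧ σ = Equiv.swap i j * π) → 0 < P π σ) :
    ∀ t : ℕ, n - 1 ≤ t → ∀ π σ : Equiv.Perm (Fin n), 0 < (P ^ t) π σ := by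
  intro t ht π σ
  have hcard : #(σ * π⁻¹).support ≤ n := card_finset_fin_le _
  refine transposition_walk_power_pos_general hnonneg hlazy ?_ (by omega)
  rintro _ ⟨i, j, hij, rfl⟩ π
  exact hswap π _ ⟨i, j, hij, rfl⟩
end

section
/- Let S be a nonempty finite type and let P be a row-stochastic matrix indexed by S (all entries nonnegative and each row summing to 1). If P is irreducible, i.e., for all i, j : S there exists t ≥ 1 with (P^t) i j > 0, then there exists a unique probability distribution μ : S → ℝ (with μ i ≥ 0 for all i and ∑ i, μ i = 1) satisfying μ P = μ, i.e., ∑ i, μ i * P i j = μ j for every j : S. This μ is called the stationary distribution of P. -/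
/-!
Since `P - 1` kills the vector `1` it is singular, so `P` also has a nonzero left-fixed vector `v`.
Positivity gives `v⁺ ≤ v⁺ P`, and since `P` preserves total mass this is an equality. Hence `|v|`
is left-fixed too, and normalizing it gives a stationary distribution. For uniqueness, let `v` be
the difference of two stationary distributions and `o` a state that can be reached from every
state. Up to sign `v o ≤ 0`, so `v⁺` is a nonnegative left-fixed vector vanishing at `o`; it then
vanishes at every state leading to `o`, that is, everywhere. So `v ≤ 0`, and `v` has total mass `0`.
-/

section

open scoped Matrix

variable {m n R : Type*} [Fintype n]

theorem vecMul_pow_eq_self [DecidableEq n] [Semiring R] {P : Matrix n n R} {v : n → R}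
    (hv : v ᵥ* P = v) (t : ℕ) : v ᵥ* P ^ t = v := by
  induction t with
  | zero => rw [pow_zero, Matrix.vecMul_one]
  | succ t ih => rw [pow_succ, ← Matrix.vecMul_vecMul, ih, hv]

theorem exists_vecMul_eq_self_iff_exists_mulVec_eq_self [CommRing R] [IsDomain R]
    {P : Matrix n n R} : (∃ v ≠ 0, v ᵥ* P = v) ↔ ∃ w ≠ 0, P *ᵥ w = w := by
  classical
  have hdet := (Matrix.exists_vecMul_eq_zero_iff (M := P - 1)).trans
    Matrix.exists_mulVec_eq_zero_iff.symm
  simpa only [Matrix.vecMul_sub, Matrix.sub_mulVec, Matrix.vecMul_one, Matrix.one_mulVec,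
    sub_eq_zero] using hdet

theorem sum_vecMul_of_mulVec_one_eq_one [Fintype m] [Semiring R] {P : Matrix m n R}
    (hP : P *ᵥ 1 = 1) (v : m → R) : ∑ j, (v ᵥ* P) j = ∑ i, v i := by
  rw [← dotProduct_one, ← Matrix.dotProduct_mulVec, hP, dotProduct_one]

theorem vecMul_le_vecMul_of_nonneg [Semiring R] [PartialOrder R] [IsOrderedRing R]
    {P : Matrix n m R} (hP : ∀ i j, 0 ≤ P i j) {v w : n → R} (h : v ≤ w) : v ᵥ* P ≤ w ᵥ* P :=
  fun j ↦ dotProduct_le_dotProduct_of_nonneg_right h fun i ↦ hP i j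

theorem vecMul_eq_self_of_le_vecMul [Ring R] [PartialOrder R] [IsOrderedAddMonoid R]
    {P : Matrix n n R} (hP : P *ᵥ 1 = 1) {v : n → R} (h : v ≤ v ᵥ* P) : v ᵥ* P = v := by
  have hsum : ∑ j, v j = ∑ j, (v ᵥ* P) j := (sum_vecMul_of_mulVec_one_eq_one hP v).symm
  funext j
  exact ((Finset.sum_eq_sum_iff_of_le fun i _ ↦ h i).1 hsum j (Finset.mem_univ j)).symm

theorem apply_eq_zero_of_vecMul_eq_self_of_pow_pos [DecidableEq n] [Semiring R] [PartialOrder R]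
    [IsOrderedRing R] [NoZeroDivisors R] {P : Matrix n n R} (hP : ∀ i j, 0 ≤ P i j)
    {v : n → R} (hv : v ᵥ* P = v) (hv₀ : 0 ≤ v) {i k : n} (hk : v k = 0) {t : ℕ}
    (ht : 0 < (P ^ t) i k) : v i = 0 := by
  have hterm (l : n) : 0 ≤ v l * (P ^ t) l k :=
    mul_nonneg (hv₀ l) (Matrix.pow_apply_nonneg hP t l k)
  have hle : v i * (P ^ t) i k ≤ 0 := calc
    v i * (P ^ t) i k ≤ (v ᵥ* P ^ t) k :=
      Finset.single_le_sum (fun l _ ↦ hterm l) (Finset.mem_univ i)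
    _ = 0 := by rw [vecMul_pow_eq_self hv, hk]
  exact (mul_eq_zero.1 (hle.antisymm (hterm i))).resolve_right ht.ne'

theorem inv_sum_smul_mem_stdSimplex [Semifield R] [LinearOrder R] [IsStrictOrderedRing R]
    {v : n → R} (hv₀ : 0 ≤ v) (hv : v ≠ 0) : (∑ i, v i)⁻¹ • v ∈ stdSimplex R n := by
  have hsum : 0 < ∑ i, v i := Fintype.sum_pos (hv₀.lt_of_ne' hv)
  refine ⟨fun i ↦ mul_nonneg (inv_nonneg.2 hsum.le) (hv₀ i), ?_⟩
  simp only [Pi.smul_apply, smul_eq_mul, ← Finset.mul_sum, inv_mul_cancel₀ hsum.ne']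

variable [DecidableEq n]

section Lattice

variable [Ring R] [Lattice R] [IsOrderedRing R] {P : Matrix n n R} {v : n → R}

theorem posPart_vecMul_eq_self (hP : P ∈ Matrix.rowStochastic R n) (hv : v ᵥ* P = v) :
    v⁺ ᵥ* P = v⁺ := by
  refine vecMul_eq_self_of_le_vecMul hP.2 (sup_le ?_ ?_)
  · calc
      v = v ᵥ* P := hv.symm
      _ ≤ v⁺ ᵥ* P := vecMul_le_vecMul_of_nonneg hP.1 (le_posPart v)
  · exact Matrix.nonneg_vecMul_of_mem_rowStochastic hP (posPart_nonneg v)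

theorem abs_vecMul_eq_self (hP : P ∈ Matrix.rowStochastic R n) (hv : v ᵥ* P = v) :
    |v| ᵥ* P = |v| := by
  have hneg : (-v) ᵥ* P = -v := by rw [Matrix.neg_vecMul, hv]
  rw [← posPart_add_negPart, ← posPart_neg, Matrix.add_vecMul, posPart_vecMul_eq_self hP hv,
    posPart_vecMul_eq_self hP hneg]

end Lattice

section LinearOrder

variable [Ring R] [LinearOrder R] [IsOrderedRing R] [NoZeroDivisors R] {P : Matrix n n R}
  {v : n → R} {o : n}

theorem nonpos_of_vecMul_eq_self_of_apply_nonpos (hP : P ∈ Matrix.rowStochastic R n)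
    (ho : ∀ i, ∃ t, 0 < (P ^ t) i o) (hv : v ᵥ* P = v) (hvo : v o ≤ 0) : v ≤ 0 := by
  refine posPart_eq_zero.1 (funext fun i ↦ ?_)
  obtain ⟨t, ht⟩ := ho i
  exact apply_eq_zero_of_vecMul_eq_self_of_pow_pos hP.1 (posPart_vecMul_eq_self hP hv)
    (posPart_nonneg v) (posPart_eq_zero.2 hvo) ht

theorem eq_zero_of_vecMul_eq_self_of_sum_eq_zero (hP : P ∈ Matrix.rowStochastic R n)
    (ho : ∀ i, ∃ t, 0 < (P ^ t) i o) (hv : v ᵥ* P = v) (hsum : ∑ i, v i = 0) : v = 0 := by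
  wlog hvo : v o ≤ 0 generalizing v
  · refine neg_eq_zero.1 (this ?_ ?_ (neg_nonpos.2 (le_of_not_ge hvo)))
    · rw [Matrix.neg_vecMul, hv]
    · simp only [Pi.neg_apply, Finset.sum_neg_distrib, hsum, neg_zero]
  · have hnonpos : v ≤ 0 := nonpos_of_vecMul_eq_self_of_apply_nonpos hP ho hv hvo
    exact (Fintype.sum_eq_zero_iff_of_nonpos hnonpos).1 hsum

end LinearOrder

section Field

variable [Field R] [LinearOrder R] [IsStrictOrderedRing R] {P : Matrix n n R}

theorem exists_mem_stdSimplex_vecMul_eq_self [Nonempty n] (hP : P ∈ Matrix.rowStochastic R n) :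
    ∃ μ ∈ stdSimplex R n, μ ᵥ* P = μ := by
  obtain ⟨v, hv₀, hv⟩ := exists_vecMul_eq_self_iff_exists_mulVec_eq_self.2 ⟨1, one_ne_zero, hP.2⟩
  refine ⟨(∑ i, |v| i)⁻¹ • |v|, inv_sum_smul_mem_stdSimplex (abs_nonneg v) ?_, ?_⟩
  · exact fun h ↦ hv₀ (funext fun i ↦ abs_eq_zero.1 (congrFun h i))
  · rw [Matrix.smul_vecMul, abs_vecMul_eq_self hP hv]

theorem exists_unique_stationary_distribution_general (hP : P ∈ Matrix.rowStochastic R n)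
    {o : n} (ho : ∀ i, ∃ t, 0 < (P ^ t) i o) : ∃! μ, μ ∈ stdSimplex R n ∧ μ ᵥ* P = μ := by
  have : Nonempty n := ⟨o⟩
  refine existsUnique_of_exists_of_unique (exists_mem_stdSimplex_vecMul_eq_self hP) ?_
  rintro μ ν ⟨⟨-, hμ_sum⟩, hμ⟩ ⟨⟨-, hν_sum⟩, hν⟩
  refine sub_eq_zero.1 (eq_zero_of_vecMul_eq_self_of_sum_eq_zero hP ho ?_ ?_)
  · rw [Matrix.sub_vecMul, hμ, hν]
  · simp only [Pi.sub_apply, Finset.sum_sub_distrib, hμ_sum, hν_sum, sub_self]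

end Field

end

/-- A row-stochastic irreducible matrix over a nonempty finite type
has a unique stationary distribution. -/
theorem exists_unique_stationary_distribution
    (S : Type*) [Fintype S] [DecidableEq S] [Nonempty S]
    (P : Matrix S S ℝ)
    (hnonneg : ∀ i j, 0 ≤ P i j)
    (hrow : ∀ i, ∑ j, P i j = 1)
    (hirr : ∀ i j : S, ∃ t : ℕ, 1 ≤ t ∧ 0 < (P ^ t) i j) :
    ∃! μ : S → ℝ,
      (∀ i, 0 ≤ μ i) ∧ (∑ i, μ i = 1) ∧ (∀ j, ∑ i, μ i * P i j = μ j) := by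
  have hP : P ∈ Matrix.rowStochastic ℝ S := Matrix.mem_rowStochastic_iff_sum.2 ⟨hnonneg, hrow⟩
  have ho (i : S) : ∃ t, 0 < (P ^ t) i (Classical.arbitrary S) := (hirr i _).imp fun _ ht ↦ ht.2
  simpa only [stdSimplex, Set.mem_ofPred_eq, and_assoc, funext_iff, Matrix.vecMul, dotProduct]
    using exists_unique_stationary_distribution_general hP ho
end
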